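/- arXiv:1802.10286 — 10 statements merged into one kernel-verified Lean document; each statement's English description precedes it below -/
import Mathlib

section
/- At ε = ε* one has q_1 < 0, and for every τ ≥ 0 the derivative of λ ↦ D_1(λ; τ, ε*) at λ = 0, which equals p_1 + s_1 − τ q_1, is strictly positive; consequently λ = 0 is a simple root of D_1(·; τ, ε*) for every τ ≥ 0. -/
/-- `p_k` coefficient of the `k`-th mode characteristic function. -/
noncomputable def pk (ε : ℝ) (k : ℕ) : ℝ := 4 * (ε + 1) * (k : ℝ) ^ 2 * Real.pi ^ 2 + 1

/-- `r_k` coefficient of the `k`-th mode characteristic function. -/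
noncomputable def rk (ε : ℝ) (k : ℕ) : ℝ :=
  16 * ε * (k : ℝ) ^ 4 * Real.pi ^ 4 + 4 * (k : ℝ) ^ 2 * Real.pi ^ 2

/-- `s_k` coefficient of the `k`-th mode characteristic function. -/
noncomputable def sk : ℝ := 23 / 3

/-- `q_k` coefficient of the `k`-th mode characteristic function. -/
noncomputable def qk (ε : ℝ) (k : ℕ) : ℝ :=
  4 * (9 * ε - 4 / 3) * (k : ℝ) ^ 2 * Real.pi ^ 2 + 9

/-- The `k`-th mode characteristic function
`D_k(λ; τ, ε) = λ² + p_k λ + r_k + (s_k λ + q_k) e^{-λτ}`. -/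
noncomputable def Dk (ε τ : ℝ) (k : ℕ) (z : ℂ) : ℂ :=
  z ^ 2 + (pk ε k : ℂ) * z + (rk ε k : ℂ) +
    ((sk : ℂ) * z + (qk ε k : ℂ)) * Complex.exp (-z * (τ : ℂ))

/-- The critical diffusion ratio `ε* = (4π²/3 - 9)/(16π⁴ + 36π²)`. -/
noncomputable def epsStar : ℝ := (4 * Real.pi ^ 2 / 3 - 9) / (16 * Real.pi ^ 4 + 36 * Real.pi ^ 2)

/-- The zeroth-mode characteristic function `D_0(λ; τ) = λ² + λ + ((23/3)λ + 9)e^{-λτ}`. -/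
noncomputable def D0 (τ : ℝ) (z : ℂ) : ℂ :=
  z ^ 2 + z + ((23 / 3 : ℂ) * z + 9) * Complex.exp (-z * (τ : ℂ))

/-- The critical Hopf frequency `ω* = √((520 + √296644)/18)`. -/
noncomputable def omegaStar : ℝ := Real.sqrt ((520 + Real.sqrt 296644) / 18)

theorem epsStar_pos : 0 < epsStar := by
  have h3 := Real.pi_gt_three
  unfold epsStar
  apply div_pos
  · nlinarith
  · positivity

theorem rk_add_qk : rk epsStar 1 + qk epsStar 1 = 0 := by
  have h3 := Real.pi_pos
  have hd : 16 * Real.pi ^ 4 + 36 * Real.pi ^ 2 ≠ 0 := by positivity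
  have h : epsStar * (16 * Real.pi ^ 4 + 36 * Real.pi ^ 2) = 4 * Real.pi ^ 2 / 3 - 9 := by
    unfold epsStar
    exact div_mul_cancel₀ _ hd
  unfold rk qk
  push_cast
  linarith

/-- At `ε = ε*` one has `q_1 < 0`, and for every `τ ≥ 0` the derivative of
`λ ↦ D_1(λ; τ, ε*)` at `λ = 0`, which equals `p_1 + s_1 - τ q_1`, is strictly positive;
consequently `λ = 0` is a simple root of `D_1(·; τ, ε*)` for every `τ ≥ 0`. -/
theorem D1_zero_simple_root :
    qk epsStar 1 < 0 ∧
    ∀ τ : ℝ, 0 ≤ τ →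
      HasDerivAt (Dk epsStar τ 1) ((pk epsStar 1 + sk - τ * qk epsStar 1 : ℝ) : ℂ) 0 ∧
      0 < pk epsStar 1 + sk - τ * qk epsStar 1 ∧
      Dk epsStar τ 1 0 = 0 ∧
      ((pk epsStar 1 + sk - τ * qk epsStar 1 : ℝ) : ℂ) ≠ 0 := by
  have he := epsStar_pos
  have hpi := Real.pi_pos
  have hrq := rk_add_qk
  have hr : 0 < rk epsStar 1 := by
    unfold rk
    positivity
  have hp : 0 < pk epsStar 1 := by
    unfold pk
    positivity
  have hs : 0 < sk := by
    unfold sk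
    norm_num
  have hq : qk epsStar 1 < 0 := by linarith
  refine ⟨hq, fun τ hτ => ?_⟩
  have hpos : 0 < pk epsStar 1 + sk - τ * qk epsStar 1 := by nlinarith
  refine ⟨?_, hpos, ?_, ?_⟩
  · have h0 := hasDerivAt_id (0 : ℂ)
    have hE := ((h0.neg.mul_const (τ : ℂ))).cexp
    have h1 := ((h0.pow 2).add (h0.const_mul (pk epsStar 1 : ℂ))).add_const (rk epsStar 1 : ℂ)
    have h2 := ((h0.const_mul (sk : ℂ)).add_const (qk epsStar 1 : ℂ)).mul hE
    refine (h1.add h2).congr_deriv ?_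
    simp
    ring
  · have hc : (rk epsStar 1 : ℂ) + (qk epsStar 1 : ℂ) = 0 := by exact_mod_cast hrq
    simp [Dk, hc]
  · exact_mod_cast hpos.ne'
end

section
/- For every ε with 0 < ε < ε* and every τ ≥ 0, there exists a real number λ > 0 such that D_1(λ; τ, ε) = 0; hence for 0 < ε < ε* the constant steady state is linearly unstable for every delay. -/
/-- For every `ε` with `0 < ε < ε*` and every `τ ≥ 0`, there exists a real `λ > 0`
with `D_1(λ; τ, ε) = 0`; hence for `0 < ε < ε*` the constant steady state is
linearly unstable for every delay. -/
theorem D1_positive_real_root (ε : ℝ) (hε0 : 0 < ε) (hε : ε < epsStar)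
    (τ : ℝ) (hτ : 0 ≤ τ) :
    ∃ lam : ℝ, 0 < lam ∧ Dk ε τ 1 ((lam : ℝ) : ℂ) = 0 := by
  have hpi3 := Real.pi_gt_three
  have hpi4 := Real.pi_lt_four
  have hsq : Real.pi ^ 2 < 10 := by nlinarith [Real.pi_lt_d2]
  have hsq0 : 0 < Real.pi ^ 2 := by positivity
  have hq4 : 0 < Real.pi ^ 4 := by positivity
  have hneg : rk ε 1 + qk ε 1 < 0 := by
    unfold epsStar at hε
    rw [lt_div_iff₀ (by positivity)] at hε
    simp only [rk, qk, Nat.cast_one]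
    nlinarith
  let f : ℝ → ℝ := fun x => x ^ 2 + pk ε 1 * x + rk ε 1 + (sk * x + qk ε 1) * Real.exp (-x * τ)
  have hf : Continuous f := by
    dsimp only [f]
    fun_prop
  have h0 : f 0 < 0 := by
    simp only [f]
    norm_num
    linarith
  have h1 : 0 < f 10 := by
    have a : 0 < pk ε 1 := by unfold pk; positivity
    have b : 0 < rk ε 1 := by unfold rk; positivity
    have c : 0 < sk * 10 + qk ε 1 := by
      have h := mul_pos hε0 hsq0
      simp only [sk, qk, Nat.cast_one]
      nlinarith
    have e := Real.exp_pos (-10 * τ)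
    have := mul_pos c e
    simp only [f]
    nlinarith
  obtain ⟨x, hx, hfx⟩ := intermediate_value_Icc (by norm_num : (0 : ℝ) ≤ 10)
    hf.continuousOn ⟨h0.le, h1.le⟩
  refine ⟨x, lt_of_le_of_ne hx.1 ?_, ?_⟩
  · rintro rfl
    exact h0.ne hfx
  · have h := congrArg (fun y : ℝ => (y : ℂ)) hfx
    simp only [f] at h
    push_cast at h
    exact h
end

section
/- For every ε ≥ ε* and every integer k ≥ 2, one has r_k + q_k = ε(16k⁴π⁴ + 36k²π²) − (4/3)k²π² + 9 > 0; equivalently, D_k(0; τ, ε) > 0 for every τ ≥ 0. Hence k = 1 is the unique spatial mode whose characteristic function acquires a zero root as ε decreases through ε*. -/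
/-- For every `ε ≥ ε*` and every integer `k ≥ 2`,
`r_k + q_k = ε(16k⁴π⁴ + 36k²π²) - (4/3)k²π² + 9 > 0`; equivalently `D_k(0; τ, ε) > 0`
for every `τ ≥ 0`.  Hence `k = 1` is the unique mode whose characteristic function
acquires a zero root as `ε` decreases through `ε*`. -/
theorem Dk_zero_positive_for_higher_modes (ε : ℝ) (hε : epsStar ≤ ε) (k : ℕ) (hk : 2 ≤ k) :
    (rk ε k + qk ε k =
      ε * (16 * (k : ℝ) ^ 4 * Real.pi ^ 4 + 36 * (k : ℝ) ^ 2 * Real.pi ^ 2) -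
        (4 / 3) * (k : ℝ) ^ 2 * Real.pi ^ 2 + 9) ∧
    0 < rk ε k + qk ε k ∧
    ∀ τ : ℝ, 0 ≤ τ → Dk ε τ k 0 = ((rk ε k + qk ε k : ℝ) : ℂ) := by
  have h1 : rk ε k + qk ε k =
      ε * (16 * (k : ℝ) ^ 4 * Real.pi ^ 4 + 36 * (k : ℝ) ^ 2 * Real.pi ^ 2) -
        (4 / 3) * (k : ℝ) ^ 2 * Real.pi ^ 2 + 9 := by
    unfold rk qk; ring
  refine ⟨h1, ?_, ?_⟩
  · rw [h1]
    have hx : (9.8 : ℝ) < Real.pi ^ 2 := by nlinarith [Real.pi_gt_d2]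
    have hk' : (2 : ℝ) ≤ k := by exact_mod_cast hk
    have hm : (4 : ℝ) ≤ (k : ℝ) ^ 2 := by nlinarith
    unfold epsStar at hε
    have e1 : Real.pi ^ 4 = (Real.pi ^ 2) ^ 2 := by ring
    have e2 : (k : ℝ) ^ 4 = ((k : ℝ) ^ 2) ^ 2 := by ring
    rw [e1] at hε ⊢
    rw [e2]
    generalize Real.pi ^ 2 = x at *
    generalize (k : ℝ) ^ 2 = m at *
    have hd : 0 < 16 * x ^ 2 + 36 * x := by positivity
    rw [div_le_iff₀ hd] at hε
    have hpos : 0 < 4 * x + 9 := by linarith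
    have hB : 0 < 4 * x * (4 * x / 3 - 9) * m - 9 * (4 * x + 9) := by
      have h0 : 0 < 4 * x * (4 * x / 3 - 9) := by
        apply mul_pos <;> linarith
      have h2 := mul_le_mul_of_nonneg_left hm h0.le
      nlinarith
    have hC := mul_pos (show 0 < m - 1 by linarith) hB
    have hD : 0 ≤ m * (4 * x * m + 9) := by
      have : 0 ≤ x * m := by apply mul_nonneg <;> linarith
      apply mul_nonneg <;> nlinarith
    have hE := mul_le_mul_of_nonneg_right hε hD
    refine (pos_iff_pos_of_mul_pos ?_).mpr hpos
    nlinarith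
  · intro τ _
    simp [Dk]
end

section
/- The number ω* = √((520 + √296644)/18) is the unique positive real root of ω⁴ − (520/9)ω² − 81 = 0, and satisfies 7.69 < ω* < 7.70. Moreover, for any ω > 0, there exists τ ∈ ℝ such that D_0(iω; τ) = 0 if and only if ω = ω*. -/
/-- `ω* = √((520 + √296644)/18)` is the unique positive real root of
`ω⁴ - (520/9)ω² - 81 = 0` and satisfies `7.69 < ω* < 7.70`.  Moreover, for any `ω > 0`
there exists `τ ∈ ℝ` with `D_0(iω; τ) = 0` if and only if `ω = ω*`. -/
theorem omegaStar_characterization :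
    (0 < omegaStar ∧ omegaStar ^ 4 - (520 / 9) * omegaStar ^ 2 - 81 = 0) ∧
    (∀ ω : ℝ, 0 < ω → ω ^ 4 - (520 / 9) * ω ^ 2 - 81 = 0 → ω = omegaStar) ∧
    (7.69 < omegaStar ∧ omegaStar < 7.70) ∧
    (∀ ω : ℝ, 0 < ω →
      ((∃ τ : ℝ, D0 τ (Complex.I * (ω : ℂ)) = 0) ↔ ω = omegaStar)) := by
  have hs : Real.sqrt 296644 ^ 2 = 296644 := Real.sq_sqrt (by norm_num)
  have hs0 : 0 ≤ Real.sqrt 296644 := Real.sqrt_nonneg _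
  have hw2 : omegaStar ^ 2 = (520 + Real.sqrt 296644) / 18 :=
    Real.sq_sqrt (by positivity)
  have hpos : 0 < omegaStar := Real.sqrt_pos.mpr (by positivity)
  have hroot : omegaStar ^ 4 - (520 / 9) * omegaStar ^ 2 - 81 = 0 := by
    have h4 : omegaStar ^ 4 = (omegaStar ^ 2) ^ 2 := by ring
    rw [h4, hw2]
    linear_combination hs / 324
  have huniq : ∀ ω : ℝ, 0 < ω → ω ^ 4 - (520 / 9) * ω ^ 2 - 81 = 0 → ω = omegaStar := by
    intro ω hω h
    have hf : (ω ^ 2 - omegaStar ^ 2) * (ω ^ 2 + omegaStar ^ 2 - 520 / 9) = 0 := by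
      linear_combination h - hroot
    have hlow : 0 < ω ^ 2 + omegaStar ^ 2 - 520 / 9 := by
      have h1 : (520 : ℝ) < Real.sqrt 296644 := Real.lt_sqrt_of_sq_lt (by norm_num)
      have h2 : 0 < ω ^ 2 := by positivity
      rw [hw2]
      linarith
    have he : ω ^ 2 - omegaStar ^ 2 = 0 := by
      rcases mul_eq_zero.mp hf with h1 | h1
      · exact h1
      · exact absurd h1 hlow.ne'
    exact (sq_eq_sq₀ hω.le hpos.le).mp (by linarith)
  refine ⟨⟨hpos, hroot⟩, huniq, ⟨?_, ?_⟩, ?_⟩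
  · have h1 : (544.5 : ℝ) < Real.sqrt 296644 := Real.lt_sqrt_of_sq_lt (by norm_num)
    exact Real.lt_sqrt_of_sq_lt (by norm_num at h1 ⊢; linarith)
  · have h1 : Real.sqrt 296644 < 545 := (Real.sqrt_lt' (by norm_num)).mpr (by norm_num)
    exact (Real.sqrt_lt' (by norm_num)).mpr (by norm_num at h1 ⊢; linarith)
  intro ω hω
  have hN1 : Complex.normSq ((Complex.I * (ω : ℂ)) ^ 2 + Complex.I * (ω : ℂ)) = ω ^ 4 + ω ^ 2 := by
    simp [Complex.normSq_apply, pow_two]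
    ring
  have hN2 : Complex.normSq ((23 / 3 : ℂ) * (Complex.I * (ω : ℂ)) + 9)
      = (529 / 9) * ω ^ 2 + 81 := by
    have : (23 / 3 : ℂ) * (Complex.I * (ω : ℂ)) + 9
        = ((9 : ℝ) : ℂ) + ((23 / 3 * ω : ℝ) : ℂ) * Complex.I := by
      push_cast
      ring
    rw [this, Complex.normSq_add_mul_I]
    ring
  have hne : (23 / 3 : ℂ) * (Complex.I * (ω : ℂ)) + 9 ≠ 0 := by
    intro h0
    rw [h0, map_zero] at hN2
    nlinarith [sq_nonneg ω]
  constructor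
  · rintro ⟨τ, hτ⟩
    apply huniq ω hω
    unfold D0 at hτ
    have hE : Complex.normSq (Complex.exp (-(Complex.I * (ω : ℂ)) * (τ : ℂ))) = 1 := by
      have : -(Complex.I * (ω : ℂ)) * (τ : ℂ) = ((-(ω * τ) : ℝ) : ℂ) * Complex.I := by
        push_cast
        ring
      rw [this, Complex.normSq_eq_norm_sq, Complex.norm_exp_ofReal_mul_I]
      norm_num
    have h := congrArg Complex.normSq (eq_neg_of_add_eq_zero_left hτ)
    rw [Complex.normSq_neg, Complex.normSq_mul, hE, hN1, hN2] at h
    linarith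
  · intro h
    have hr : ω ^ 4 - (520 / 9) * ω ^ 2 - 81 = 0 := by rw [h]; exact hroot
    set A := (Complex.I * (ω : ℂ)) ^ 2 + Complex.I * (ω : ℂ) with hA
    set B := (23 / 3 : ℂ) * (Complex.I * (ω : ℂ)) + 9 with hB
    have hn : ‖-A / B‖ = 1 := by
      have h1 : Complex.normSq (-A / B) = 1 := by
        rw [Complex.normSq_div, Complex.normSq_neg, hN1, hN2, div_eq_one_iff_eq (by positivity)]
        linarith
      rw [Complex.normSq_eq_norm_sq] at h1
      exact (pow_eq_one_iff_of_nonneg (norm_nonneg _) two_ne_zero).mp h1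
    refine ⟨-Complex.arg (-A / B) / ω, ?_⟩
    have hexp : Complex.exp (-(Complex.I * (ω : ℂ)) * ((-Complex.arg (-A / B) / ω : ℝ) : ℂ))
        = -A / B := by
      have h2 := Complex.norm_mul_exp_arg_mul_I (-A / B)
      rw [hn, Complex.ofReal_one, one_mul] at h2
      have hωc : (ω : ℂ) ≠ 0 := by exact_mod_cast hω.ne'
      have h3 : -(Complex.I * (ω : ℂ)) * ((-Complex.arg (-A / B) / ω : ℝ) : ℂ)
          = (Complex.arg (-A / B) : ℂ) * Complex.I := by
        push_cast
        field_simp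
      rw [h3, h2]
    unfold D0
    rw [hexp, ← hA, ← hB, mul_div_cancel₀ _ hne]
    ring
end

section
/- There exists a unique τ ∈ (0, 2π/ω*) such that D_0(iω*; τ) = 0; calling this value τ*, it satisfies 0.20 < τ* < 0.21. -/
lemma omega_facts : 7.69 < omegaStar ∧ omegaStar < 7.691 ∧
    9 * omegaStar ^ 4 - 520 * omegaStar ^ 2 - 729 = 0 := by
  have h1 : (544.6 : ℝ) < Real.sqrt 296644 := Real.lt_sqrt_of_sq_lt (by norm_num)
  have h2 : Real.sqrt 296644 < (544.66 : ℝ) := by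
    rw [Real.sqrt_lt' (by norm_num)]; norm_num
  have h3 : Real.sqrt 296644 ^ 2 = 296644 := Real.sq_sqrt (by norm_num)
  have h4 : omegaStar ^ 2 = (520 + Real.sqrt 296644) / 18 := Real.sq_sqrt (by positivity)
  refine ⟨?_, ?_, ?_⟩
  · apply Real.lt_sqrt_of_sq_lt
    linarith
  · unfold omegaStar
    rw [Real.sqrt_lt' (by norm_num)]
    linarith
  · have : omegaStar ^ 4 = (omegaStar ^ 2) ^ 2 := by ring
    rw [this, h4]
    linear_combination (1 / 36) * h3

lemma D0_iff (w τ : ℝ) : D0 τ (Complex.I * (w : ℂ)) = 0 ↔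
    (-w ^ 2 + 9 * Real.cos (w * τ) + 23 / 3 * w * Real.sin (w * τ) = 0 ∧
      w + 23 / 3 * w * Real.cos (w * τ) - 9 * Real.sin (w * τ) = 0) := by
  have h : D0 τ (Complex.I * (w : ℂ)) =
      ((-w ^ 2 + 9 * Real.cos (w * τ) + 23 / 3 * w * Real.sin (w * τ) : ℝ) : ℂ) +
      ((w + 23 / 3 * w * Real.cos (w * τ) - 9 * Real.sin (w * τ) : ℝ) : ℂ) * Complex.I := by
    unfold D0
    have e : -(Complex.I * (w : ℂ)) * (τ : ℂ) = ((-(w * τ) : ℝ) : ℂ) * Complex.I := by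
      push_cast; ring
    rw [e, Complex.exp_mul_I, ← Complex.ofReal_cos, ← Complex.ofReal_sin, Real.cos_neg,
      Real.sin_neg]
    push_cast
    linear_combination ((w : ℂ) ^ 2 - 23 / 3 * w * Complex.sin (w * τ)) * Complex.I_sq
  rw [h, Complex.ext_iff]
  simp only [Complex.add_re, Complex.add_im, Complex.ofReal_re, Complex.ofReal_im,
    Complex.re_ofReal_mul, Complex.im_ofReal_mul, Complex.I_re, Complex.I_im, Complex.zero_re,
    Complex.zero_im, mul_zero, mul_one, add_zero, zero_add]

lemma key (w : ℝ) (hw : 0 < w) (hq : 9 * w ^ 4 - 520 * w ^ 2 - 729 = 0) (C S : ℝ) :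
    (-w ^ 2 + 9 * C + 23 / 3 * w * S = 0 ∧ w + 23 / 3 * w * C - 9 * S = 0) ↔
    (C = 4 / (3 * (w ^ 2 + 1)) ∧ S = (23 * w ^ 2 + 27) / (3 * w * (w ^ 2 + 1))) := by
  constructor
  · rintro ⟨h1, h2⟩
    have hp : w ^ 2 * 3 ≠ 0 := by positivity
    constructor
    · rw [eq_div_iff (by positivity)]
      apply mul_left_cancel₀ hp
      linear_combination 81 * h1 + 69 * w * h2 + C * hq
    · rw [eq_div_iff (by positivity)]
      apply mul_left_cancel₀ hp
      linear_combination 69 * w ^ 2 * h1 - 81 * w * h2 + w * S * hq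
  · rintro ⟨rfl, rfl⟩
    constructor
    · field_simp
      linear_combination (-1) * hq
    · field_simp
      linear_combination hq

theorem tauStar_exists_unique :
    (∃! τ : ℝ, τ ∈ Set.Ioo 0 (2 * Real.pi / omegaStar) ∧
      D0 τ (Complex.I * (omegaStar : ℂ)) = 0) ∧
    (∀ τ : ℝ, τ ∈ Set.Ioo 0 (2 * Real.pi / omegaStar) →
      D0 τ (Complex.I * (omegaStar : ℂ)) = 0 → 0.20 < τ ∧ τ < 0.21) := by
  obtain ⟨hl, hu, hq⟩ := omega_facts
  generalize omegaStar = w at *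
  have hw : 0 < w := by linarith
  simp only [D0_iff, key w hw hq]
  have hpi := Real.pi_gt_d6
  have hpi2 := Real.pi_lt_d6
  set c := 4 / (3 * (w ^ 2 + 1)) with hc
  set s := (23 * w ^ 2 + 27) / (3 * w * (w ^ 2 + 1)) with hs
  have hs0 : 0 < s := by positivity
  have hc0 : 0 < c := by positivity
  have hc1 : c < 0.0225 := by
    rw [hc, div_lt_iff₀ (by positivity)]; nlinarith
  have hcs : c ^ 2 + s ^ 2 = 1 := by
    rw [hc, hs]; field_simp
    linear_combination (-(w ^ 2 + 1)) * hq
  have U : ∀ τ : ℝ, τ ∈ Set.Ioo 0 (2 * Real.pi / w) →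
      (Real.cos (w * τ) = c ∧ Real.sin (w * τ) = s) → w * τ = Real.arccos c := by
    rintro τ ⟨h0, h1⟩ ⟨h2, h3⟩
    rw [lt_div_iff₀ hw] at h1
    have hx : w * τ < Real.pi := by
      by_contra hcon
      push Not at hcon
      have := Real.sin_nonneg_of_nonneg_of_le_pi (x := w * τ - Real.pi) (by linarith)
        (by linarith)
      rw [Real.sin_sub_pi] at this
      linarith
    rw [← h2, Real.arccos_cos (by positivity) hx.le]
  have A1 : Real.arccos c < Real.pi / 2 := Real.arccos_lt_pi_div_two.2 hc0
  have A2 : 0.2 * w < Real.arccos c := by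
    have hcos : c < Real.cos (0.2 * w) := by
      rw [← Real.sin_pi_div_two_sub]
      have := Real.sin_gt_sub_cube (x := 0.03) (by norm_num)
      have h2 : Real.sin 0.03 ≤ Real.sin (Real.pi / 2 - 0.2 * w) :=
        Real.sin_le_sin_of_le_of_le_pi_div_two (by linarith) (by linarith) (by linarith)
      norm_num at this hc1 ⊢
      norm_num at h2
      linarith
    have := Real.arccos_lt_arccos (by linarith) hcos (Real.cos_le_one _)
    rwa [Real.arccos_cos (by positivity) (by linarith)] at this
  refine ⟨⟨Real.arccos c / w, ⟨⟨by apply div_pos (by linarith) hw, ?_⟩, ?_⟩, ?_⟩, ?_⟩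
  · apply div_lt_div_of_pos_right _ hw
    linarith
  · rw [mul_div_cancel₀ _ hw.ne', Real.cos_arccos (by linarith) (by linarith), Real.sin_arccos]
    refine ⟨rfl, ?_⟩
    rw [← hcs, add_sub_cancel_left, Real.sqrt_sq hs0.le]
  · rintro τ ⟨h1, h2⟩
    rw [eq_div_iff hw.ne', mul_comm]
    exact U τ h1 h2
  · intro τ h1 h2
    have := U τ h1 h2
    constructor <;> nlinarith
end

section
/- For ε = ε*, every τ ≥ 0 and every nonzero real ω, D_1(iω; τ, ε*) ≠ 0; that is, the first-mode characteristic function has no nonzero purely imaginary roots for any delay. (This holds because at ε = ε* one has r_1 + q_1 = 0 and p_1² − s_1² − 2r_1 > 0, so ω⁴ + (p_1² − s_1² − 2r_1)ω² + r_1² − q_1² > 0 for ω ≠ 0.) -/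
/-- For `ε = ε*`, every `τ ≥ 0` and every nonzero real `ω`, `D_1(iω; τ, ε*) ≠ 0`;
i.e., the first-mode characteristic function has no nonzero purely imaginary roots
for any delay. -/
theorem D1_no_purely_imaginary_roots (τ : ℝ) (hτ : 0 ≤ τ) (ω : ℝ) (hω : ω ≠ 0) :
    Dk epsStar τ 1 (Complex.I * (ω : ℂ)) ≠ 0 := by
  intro h
  have hpi := Real.pi_gt_three
  have hE : epsStar * (16 * Real.pi ^ 4 + 36 * Real.pi ^ 2) = 4 * Real.pi ^ 2 / 3 - 9 := by
    unfold epsStar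
    exact div_mul_cancel₀ _ (by positivity)
  have heps : 0 < epsStar := by
    unfold epsStar
    apply div_pos
    · nlinarith
    · positivity
  have hrq : qk epsStar 1 = - rk epsStar 1 := by
    unfold qk rk
    push_cast
    linarith
  have hps : 0 < pk epsStar 1 ^ 2 - sk ^ 2 - 2 * rk epsStar 1 := by
    have e : pk epsStar 1 ^ 2 - sk ^ 2 - 2 * rk epsStar 1
        = (epsStar ^ 2 + 1) * (4 * Real.pi ^ 2) ^ 2 + 2 * epsStar * (4 * Real.pi ^ 2) + 1
          - (23 / 3) ^ 2 := by
      unfold pk rk sk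
      push_cast
      ring
    rw [e]
    have hx : 36 < 4 * Real.pi ^ 2 := by nlinarith
    generalize 4 * Real.pi ^ 2 = x at hx
    have h1 : 0 ≤ epsStar ^ 2 * x ^ 2 := by positivity
    have h2 : 0 ≤ epsStar * x := by positivity
    nlinarith
  unfold Dk at h
  generalize pk epsStar 1 = p at *
  rw [hrq] at h
  generalize rk epsStar 1 = r at *
  generalize sk = s at *
  have he : Complex.exp (-(Complex.I * (ω : ℂ)) * (τ : ℂ))
      = (Real.cos (ω * τ) : ℂ) - (Real.sin (ω * τ) : ℂ) * Complex.I := by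
    have : -(Complex.I * (ω : ℂ)) * (τ : ℂ) = ((-(ω * τ) : ℝ) : ℂ) * Complex.I := by
      push_cast
      ring
    rw [this, Complex.exp_mul_I, ← Complex.ofReal_cos, ← Complex.ofReal_sin, Real.cos_neg,
      Real.sin_neg]
    push_cast
    ring
  rw [he] at h
  have hcs := Real.sin_sq_add_cos_sq (ω * τ)
  generalize Real.cos (ω * τ) = c at *
  generalize Real.sin (ω * τ) = d at *
  have hre := congrArg Complex.re h
  have him := congrArg Complex.im h
  simp [pow_two] at hre him
  have h1 : ω ^ 2 - r = -r * c + s * ω * d := by linarith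
  have h2 : p * ω = -(s * ω * c + r * d) := by linarith
  have h3 : (ω ^ 2 - r) ^ 2 + (p * ω) ^ 2 = s ^ 2 * ω ^ 2 + r ^ 2 := by
    rw [h1, h2]
    linear_combination (s ^ 2 * ω ^ 2 + r ^ 2) * hcs
  have hw : 0 < ω ^ 2 := by positivity
  nlinarith [mul_pos hps hw, mul_pos hw hw]
end

section
/- For every ε ≥ ε*, every integer k ≥ 2, every τ ≥ 0 and every real ω, D_k(iω; τ, ε) ≠ 0; that is, no characteristic function of a mode k ≥ 2 ever has a purely imaginary (or zero) root when ε ≥ ε*. (This follows since for k ≥ 2 and ε ≥ ε* one has r_k + q_k > 0, r_k − q_k > 0, and p_k² − s_k² − 2r_k > 0.) -/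
theorem aux_ineqs (ε : ℝ) (hε : epsStar ≤ ε) (k : ℕ) (hk : 2 ≤ k) :
    0 < rk ε k + qk ε k ∧ 0 < rk ε k - qk ε k ∧ 0 < pk ε k ^ 2 - sk ^ 2 - 2 * rk ε k := by
  have h1 := Real.pi_gt_d4
  have h2 := Real.pi_lt_d4
  have hP1 : 9.869 < Real.pi ^ 2 := by nlinarith
  have hP2 : Real.pi ^ 2 < 9.87 := by nlinarith
  have he : (0.0021 : ℝ) ≤ ε := by
    refine le_trans ?_ hε
    unfold epsStar
    have h4 : Real.pi ^ 4 = (Real.pi ^ 2) ^ 2 := by ring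
    rw [h4, le_div_iff₀ (by positivity)]
    nlinarith
  have hk' : (2 : ℝ) ≤ k := by exact_mod_cast hk
  have hk2 : (4 : ℝ) ≤ (k : ℝ) ^ 2 := by nlinarith
  obtain ⟨x, hx⟩ : ∃ x, x = 4 * (k : ℝ) ^ 2 * Real.pi ^ 2 := ⟨_, rfl⟩
  have hx1 : 157 ≤ x := by rw [hx]; nlinarith
  have hp : pk ε k = (ε + 1) * x + 1 := by rw [hx]; unfold pk; ring
  have hr : rk ε k = ε * x ^ 2 + x := by rw [hx]; unfold rk; ring
  have hq : qk ε k = (9 * ε - 4 / 3) * x + 9 := by rw [hx]; unfold qk; ring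
  rw [hp, hr, hq, sk]
  refine ⟨?_, ?_, ?_⟩
  · have : 0.0021 * (x ^ 2 + 9 * x) ≤ ε * (x ^ 2 + 9 * x) := by gcongr
    nlinarith
  · have : 0 ≤ ε * (x * (x - 9)) := by
      apply mul_nonneg (by linarith); apply mul_nonneg <;> linarith
    nlinarith
  · have : 0 ≤ ε ^ 2 * x ^ 2 := by positivity
    have : 0 ≤ ε * x := by apply mul_nonneg <;> linarith
    nlinarith

/-- For every `ε ≥ ε*`, every integer `k ≥ 2`, every `τ ≥ 0` and every real `ω`,
`D_k(iω; τ, ε) ≠ 0`; i.e., no characteristic function of a mode `k ≥ 2` ever has a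
purely imaginary (or zero) root when `ε ≥ ε*`. -/
theorem higher_modes_no_imaginary_roots (ε : ℝ) (hε : epsStar ≤ ε) (k : ℕ) (hk : 2 ≤ k)
    (τ : ℝ) (hτ : 0 ≤ τ) (ω : ℝ) :
    Dk ε τ k (Complex.I * (ω : ℂ)) ≠ 0 := by
  obtain ⟨h1, h2, h3⟩ := aux_ineqs ε hε k hk
  intro h
  unfold Dk at h
  generalize pk ε k = p at *
  generalize rk ε k = r at *
  generalize qk ε k = q at *
  generalize sk = s at *
  have hexp : Complex.normSq (Complex.exp (-(Complex.I * (ω : ℂ)) * (τ : ℂ))) = 1 := by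
    have e : -(Complex.I * (ω : ℂ)) * (τ : ℂ) = ((-(ω * τ) : ℝ) : ℂ) * Complex.I := by
      push_cast; ring
    rw [e, Complex.normSq_eq_norm_sq, Complex.norm_exp_ofReal_mul_I]; norm_num
  have h' := congrArg Complex.normSq (eq_neg_of_add_eq_zero_left h)
  rw [Complex.normSq_neg, Complex.normSq_mul, hexp, mul_one] at h'
  have e1 : (Complex.I * (ω : ℂ)) ^ 2 + (p : ℂ) * (Complex.I * ω) + (r : ℂ)
      = ((r - ω ^ 2 : ℝ) : ℂ) + ((p * ω : ℝ) : ℂ) * Complex.I := by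
    push_cast; rw [mul_pow, Complex.I_sq]; ring
  have e2 : (s : ℂ) * (Complex.I * (ω : ℂ)) + (q : ℂ)
      = (q : ℂ) + ((s * ω : ℝ) : ℂ) * Complex.I := by
    push_cast; ring
  rw [e1, e2, Complex.normSq_add_mul_I, Complex.normSq_add_mul_I] at h'
  have a1 : 0 < (r + q) * (r - q) := mul_pos h1 h2
  have a2 : 0 ≤ (p ^ 2 - s ^ 2 - 2 * r) * ω ^ 2 := mul_nonneg h3.le (sq_nonneg _)
  have a3 : 0 ≤ (ω ^ 2) ^ 2 := sq_nonneg _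
  nlinarith
end

section
/- For every ε > ε* and every τ with 0 ≤ τ < τ*, every k ∈ ℕ₀ and every λ ∈ ℂ with D_k(λ; τ, ε) = 0 satisfies Re λ < 0; i.e., the constant steady state (3, 2/9) is linearly asymptotically stable for τ ∈ [0, τ*) and ε > ε*. -/
theorem aux_expand (ε τ x y : ℝ) (k : ℕ) (h : Dk ε τ k (⟨x, y⟩ : ℂ) = 0) :
    (x ^ 2 - y ^ 2 + pk ε k * x + rk ε k + Real.exp (-(x * τ)) *
      ((sk * x + qk ε k) * Real.cos (y * τ) + sk * y * Real.sin (y * τ)) = 0) ∧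
    (2 * x * y + pk ε k * y + Real.exp (-(x * τ)) *
      (sk * y * Real.cos (y * τ) - (sk * x + qk ε k) * Real.sin (y * τ)) = 0) := by
  have h1 := congrArg Complex.re h
  have h2 := congrArg Complex.im h
  simp [Dk, Complex.exp_re, Complex.exp_im, pow_two] at h1 h2
  constructor
  · linear_combination h1
  · linear_combination h2

/-- Modulus consequence. -/
theorem aux_modulus (p r s q x y E c n : ℝ) (hE0 : 0 < E) (hE1 : E ≤ 1)
    (hcn : c ^ 2 + n ^ 2 = 1)
    (h1 : x ^ 2 - y ^ 2 + p * x + r + E * ((s * x + q) * c + s * y * n) = 0)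
    (h2 : 2 * x * y + p * y + E * (s * y * c - (s * x + q) * n) = 0) :
    (x ^ 2 - y ^ 2 + p * x + r) ^ 2 + (2 * x * y + p * y) ^ 2
      ≤ (s * x + q) ^ 2 + (s * y) ^ 2 := by
  have e1 : x ^ 2 - y ^ 2 + p * x + r = -(E * ((s * x + q) * c + s * y * n)) := by linarith
  have e2 : 2 * x * y + p * y = -(E * (s * y * c - (s * x + q) * n)) := by linarith
  rw [e1, e2]
  have : (-(E * ((s * x + q) * c + s * y * n))) ^ 2 + (-(E * (s * y * c - (s * x + q) * n))) ^ 2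
      = E ^ 2 * ((s * x + q) ^ 2 + (s * y) ^ 2) := by
    linear_combination (E ^ 2 * ((s * x + q) ^ 2 + (s * y) ^ 2)) * hcn
  rw [this]
  have hE2 : E ^ 2 ≤ 1 := by nlinarith
  have : 0 ≤ (s * x + q) ^ 2 + (s * y) ^ 2 := by positivity
  nlinarith

theorem aux_high (p r s q x y : ℝ) (hx : 0 ≤ x) (hs : 0 < s) (hps : s ≤ p)
    (hpr : s ^ 2 ≤ p ^ 2 - 2 * r) (hq1 : 0 < r + q) (hq2 : 0 < r - q)
    (h : (x ^ 2 - y ^ 2 + p * x + r) ^ 2 + (2 * x * y + p * y) ^ 2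
      ≤ (s * x + q) ^ 2 + (s * y) ^ 2) : False := by
  have hp : 0 < p := by linarith
  have hA1 : 0 < x ^ 2 + p * x + r - (s * x + q) := by nlinarith [mul_nonneg hx (sub_nonneg.2 hps)]
  have hA2 : 0 < x ^ 2 + p * x + r + (s * x + q) := by nlinarith [mul_nonneg hx hs.le, mul_nonneg hx hp.le]
  have h3 := mul_pos hA1 hA2
  have h4 : 0 ≤ y ^ 2 * (2 * x ^ 2 + 2 * p * x + (p ^ 2 - 2 * r - s ^ 2)) := by
    apply mul_nonneg (sq_nonneg _)
    nlinarith [mul_nonneg hx hp.le]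
  nlinarith [sq_nonneg (y ^ 2)]

theorem aux_pi : 39 < 4 * Real.pi ^ 2 := by
  nlinarith [Real.pi_gt_d2]

theorem aux_eps (ε : ℝ) (hε : epsStar < ε) (k : ℕ) (hk : 1 ≤ k) :
    0 < ε ∧ sk ≤ pk ε k ∧ sk ^ 2 ≤ pk ε k ^ 2 - 2 * rk ε k ∧ 0 < rk ε k + qk ε k ∧
      0 < rk ε k - qk ε k := by
  have hpi := aux_pi
  obtain ⟨X₁, hX₁⟩ : ∃ X₁, X₁ = 4 * Real.pi ^ 2 := ⟨_, rfl⟩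
  obtain ⟨X, hX⟩ : ∃ X, X = 4 * Real.pi ^ 2 * (k : ℝ) ^ 2 := ⟨_, rfl⟩
  rw [← hX₁] at hpi
  have hes : epsStar = (X₁ / 3 - 9) / (X₁ ^ 2 + 9 * X₁) := by
    rw [epsStar, hX₁]; congr 1 <;> ring
  have hp : pk ε k = (ε + 1) * X + 1 := by rw [pk, hX]; ring
  have hr : rk ε k = ε * X ^ 2 + X := by rw [rk, hX]; ring
  have hq : qk ε k = (9 * ε - 4 / 3) * X + 9 := by rw [qk, hX]; ring
  have hXX : X = X₁ ∨ 4 * X₁ ≤ X := by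
    rcases Nat.eq_or_lt_of_le hk with h | h
    · left; rw [hX, hX₁, ← h]; norm_num
    · right
      have : (2 : ℝ) ≤ k := by exact_mod_cast h
      have h4 : (4 : ℝ) ≤ (k : ℝ) ^ 2 := by nlinarith
      rw [hX, ← hX₁]
      have := mul_le_mul_of_nonneg_left h4 (show 0 ≤ X₁ by linarith)
      linarith
  have hden : 0 < X₁ ^ 2 + 9 * X₁ := by positivity
  rw [hes, div_lt_iff₀ hden] at hε
  have hε0 : 0 < ε := by
    by_contra hc
    push Not at hc
    nlinarith
  have hX39 : 39 < X := by rcases hXX with h | h <;> linarith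
  have hkey : X / 3 - 9 < ε * (X ^ 2 + 9 * X) := by
    rcases hXX with h | h
    · rw [h]; exact hε
    · have h1 : (X / 3 - 9) * (X₁ ^ 2 + 9 * X₁) ≤ (X₁ / 3 - 9) * (X ^ 2 + 9 * X) := by
        have : 0 ≤ (X - X₁) * (X * X₁ / 3 - 9 * (X + X₁) - 81) := by
          apply mul_nonneg (by linarith)
          nlinarith
        nlinarith
      have hden2 : 0 < X ^ 2 + 9 * X := by positivity
      have h2 := mul_lt_mul_of_pos_right hε hden2
      by_contra hc
      push Not at hc
      have h3 := mul_le_mul_of_nonneg_right hc hden.le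
      nlinarith
  have hεX : 0 < ε * X := by positivity
  rw [hp, hr, hq, sk]
  refine ⟨hε0, by nlinarith, ?_, by nlinarith, by nlinarith⟩
  have : ((ε + 1) * X + 1) ^ 2 - 2 * (ε * X ^ 2 + X) = (ε * X) ^ 2 + X ^ 2 + 2 * (ε * X) + 1 := by
    ring
  rw [this]
  nlinarith [sq_nonneg (ε * X)]

theorem aux_omega : 0 < omegaStar ∧ 59 < omegaStar ^ 2 ∧ omegaStar ^ 2 < 60 ∧
    (omegaStar ^ 2) ^ 2 = 520 / 9 * omegaStar ^ 2 + 81 := by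
  have h0 : (0:ℝ) ≤ 296644 := by norm_num
  have hsq := Real.sq_sqrt h0
  have h1 : 544 < Real.sqrt 296644 := by
    rw [Real.lt_sqrt (by norm_num)]; norm_num
  have h2 : Real.sqrt 296644 < 545 := by
    rw [Real.sqrt_lt' (by norm_num)]; norm_num
  have hw : omegaStar ^ 2 = (520 + Real.sqrt 296644) / 18 := by
    rw [omegaStar, Real.sq_sqrt (by positivity)]
  refine ⟨by rw [omegaStar]; positivity, by rw [hw]; linarith, by rw [hw]; linarith, ?_⟩
  rw [hw]
  linear_combination hsq / 324

theorem aux_region (W x y : ℝ) (hW : 59 < W) (hW2 : W ^ 2 = 520 / 9 * W + 81) (hx : 0 ≤ x)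
    (h : (x ^ 2 - y ^ 2 + 1 * x + 0) ^ 2 + (2 * x * y + 1 * y) ^ 2
      ≤ (23 / 3 * x + 9) ^ 2 + (23 / 3 * y) ^ 2) : y ^ 2 ≤ W + x ∧ y ^ 2 ≤ W + 1 / 10 := by
  obtain ⟨Y, hY⟩ : ∃ Y, Y = y ^ 2 := ⟨_, rfl⟩
  have hF : Y ^ 2 - 520 / 9 * Y - 81 + Y * (2 * x ^ 2 + 2 * x) + (x ^ 2 + x) ^ 2
      - 529 / 9 * x ^ 2 - 138 * x ≤ 0 := by
    rw [hY]; nlinarith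
  rw [← hY]
  have hfac : Y ^ 2 - 520 / 9 * Y - 81 = (Y - W) * (Y + W - 520 / 9) := by
    linear_combination hW2
  rw [hfac] at hF
  have hx2 : 0 ≤ 2 * x ^ 2 + 2 * x := by positivity
  have key : ∀ d, 0 ≤ d → W + d < Y → 60 * d - 20 * x + 59 * x ^ 2 ≤ 0 := by
    intro d hd hdY
    have a1 : d * 60 ≤ (Y - W) * (Y + W - 520 / 9) :=
      mul_le_mul (by linarith) (by linarith) (by norm_num) (by linarith)
    have a2 : 59 * (2 * x ^ 2 + 2 * x) ≤ Y * (2 * x ^ 2 + 2 * x) :=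
      mul_le_mul_of_nonneg_right (by linarith) hx2
    nlinarith [sq_nonneg (x ^ 2 + x), sq_nonneg x]
  constructor
  · by_contra hc
    push Not at hc
    have := key x hx hc
    have hx0 : x = 0 := by nlinarith [sq_nonneg x]
    subst hx0
    have : 0 < (Y - W) * (Y + W - 520 / 9) := mul_pos (by linarith) (by linarith)
    nlinarith
  · by_contra hc
    push Not at hc
    have := key (1 / 10) (by norm_num) hc
    nlinarith [sq_nonneg (x - 10 / 59)]

/-- Data about the critical delay. -/
theorem aux_tau (T : ℝ) (hmem : T ∈ Set.Ioo 0 (2 * Real.pi / omegaStar))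
    (h : D0 T (Complex.I * (omegaStar : ℂ)) = 0) :
    1 + 23 / 3 * Real.cos (omegaStar * T) = 9 * Real.sin (omegaStar * T) / omegaStar ∧
    0 < T ∧ T < 21 / 100 ∧ omegaStar * T + 1 / 50 < Real.pi / 2 := by
  obtain ⟨hw, hW1, hW2, hW3⟩ := aux_omega
  obtain ⟨hT0, hT1⟩ := hmem
  rw [lt_div_iff₀ hw] at hT1
  have h1 := congrArg Complex.re h
  have h2 := congrArg Complex.im h
  have e1 : -omegaStar ^ 2 + 9 * Real.cos (omegaStar * T)
      + 23 / 3 * omegaStar * Real.sin (omegaStar * T) = 0 := by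
    simp [D0, Complex.exp_re, Complex.exp_im, pow_two] at h1
    linear_combination h1
  have e2 : omegaStar + 23 / 3 * omegaStar * Real.cos (omegaStar * T)
      - 9 * Real.sin (omegaStar * T) = 0 := by
    simp [D0, Complex.exp_re, Complex.exp_im, pow_two] at h2
    linear_combination h2
  clear h1 h2
  generalize omegaStar = w at *
  have hC : Real.cos (w * T) * (81 + 529 / 9 * w ^ 2) = 4 / 3 * w ^ 2 := by
    linear_combination 9 * e1 + 23 / 3 * w * e2
  have hS : Real.sin (w * T) * (81 + 529 / 9 * w ^ 2) = 23 / 3 * w ^ 3 + 9 * w := by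
    linear_combination 23 / 3 * w * e1 - 9 * e2
  have hCl : 1 / 50 < Real.cos (w * T) := by
    by_contra hc; push Not at hc
    nlinarith
  have hSp : 0 < Real.sin (w * T) := by
    by_contra hc; push Not at hc
    have : 0 < 23 / 3 * w ^ 3 + 9 * w := by positivity
    nlinarith
  have hwT : 0 < w * T := by positivity
  have hltpi : w * T < Real.pi := by
    by_contra hc; push Not at hc
    have := Real.sin_nonneg_of_nonneg_of_le_pi (x := w * T - Real.pi) (by linarith) (by linarith)
    rw [Real.sin_sub_pi] at this
    linarith
  have hlt2 : w * T < Real.pi / 2 := by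
    by_contra hc; push Not at hc
    have := Real.cos_nonpos_of_pi_div_two_le_of_le hc (by linarith)
    linarith
  have hmain : w * T + 1 / 50 < Real.pi / 2 := by
    have := Real.sin_le (x := Real.pi / 2 - w * T) (by linarith)
    rw [Real.sin_pi_div_two_sub] at this
    linarith
  refine ⟨?_, hT0, ?_, hmain⟩
  · rw [eq_div_iff hw.ne']; linarith
  · have hp := Real.pi_lt_d2
    have : 38 / 5 < w := by nlinarith
    nlinarith

/-- Concavity bound below the critical frequency. -/
theorem aux_concave (w T : ℝ) (hw : 0 < w) (hT : 0 < T) (hT1 : T < 21 / 100)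
    (hwT : w * T < Real.pi / 2)
    (h : 1 + 23 / 3 * Real.cos (w * T) = 9 * Real.sin (w * T) / w) (y : ℝ) (hy : 0 < y)
    (hyw : y ≤ w) : 0 ≤ 1 + 23 / 3 * Real.cos (y * T) - 9 * Real.sin (y * T) / y := by
  let G : ℝ → ℝ := fun y => y * (1 + 23 / 3 * Real.cos (y * T)) - 9 * Real.sin (y * T)
  let G1 : ℝ → ℝ := fun y => (1 + 23 / 3 * Real.cos (y * T))
    + y * (23 / 3 * (-Real.sin (y * T) * T)) - 9 * (Real.cos (y * T) * T)
  let G2 : ℝ → ℝ := fun y => 23 / 3 * (-Real.sin (y * T) * T)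
    + (23 / 3 * (-Real.sin (y * T) * T) + y * (23 / 3 * (-(Real.cos (y * T) * T) * T)))
    - 9 * (-Real.sin (y * T) * T * T)
  have hm : ∀ y, HasDerivAt (fun y : ℝ => y * T) T y := fun y => by
    simpa using (hasDerivAt_id y).mul_const T
  have hc : ∀ y, HasDerivAt (fun y : ℝ => Real.cos (y * T)) (-Real.sin (y * T) * T) y :=
    fun y => (hm y).cos
  have hs : ∀ y, HasDerivAt (fun y : ℝ => Real.sin (y * T)) (Real.cos (y * T) * T) y :=
    fun y => (hm y).sin
  have hG : ∀ y, HasDerivAt G (G1 y) y := by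
    intro y
    have := ((hasDerivAt_id y).mul (((hc y).const_mul (23 / 3)).const_add 1)).sub
      ((hs y).const_mul 9)
    refine this.congr_deriv ?_
    simp [G1]
  have hG1 : ∀ y, HasDerivAt G1 (G2 y) y := by
    intro y
    have := ((((hc y).const_mul (23 / 3)).const_add 1).add ((hasDerivAt_id y).mul
      ((((hs y).neg).mul_const T).const_mul (23 / 3)))).sub
      (((hc y).mul_const T).const_mul 9)
    refine this.congr_deriv ?_
    simp [G2]
  have hconc : ConcaveOn ℝ (Set.Icc 0 w) G := by
    have hd : deriv G = G1 := funext fun y => (hG y).deriv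
    apply concaveOn_of_deriv2_nonpos (convex_Icc 0 w)
    · exact fun y _ => (hG y).continuousAt.continuousWithinAt
    · exact fun y _ => (hG y).differentiableAt.differentiableWithinAt
    · rw [hd]; exact fun y _ => (hG1 y).differentiableAt.differentiableWithinAt
    · intro y hy
      rw [interior_Icc] at hy
      have : deriv^[2] G y = G2 y := by
        simp only [Function.iterate_succ, Function.iterate_zero, Function.comp, id]
        rw [hd, (hG1 y).deriv]
      rw [this]
      have hyT : 0 ≤ y * T := mul_nonneg hy.1.le hT.le
      have hyT2 : y * T ≤ w * T := mul_le_mul_of_nonneg_right hy.2.le hT.le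
      have hsn := Real.sin_nonneg_of_nonneg_of_le_pi hyT (by linarith)
      have hcn := Real.cos_nonneg_of_neg_pi_div_two_le_of_le (x := y * T) (by linarith) (by linarith)
      have a1 : 0 ≤ Real.sin (y * T) * T * (46 / 3 - 9 * T) :=
        mul_nonneg (mul_nonneg hsn hT.le) (by linarith)
      have a2 : 0 ≤ y * Real.cos (y * T) * T * T :=
        mul_nonneg (mul_nonneg (mul_nonneg hy.1.le hcn) hT.le) hT.le
      simp only [G2]
      nlinarith
  have hGw : G w = 0 := by
    simp only [G]; rw [h]; field_simp; ring
  have hG0 : G 0 = 0 := by simp [G]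
  have hGy : 0 ≤ G y := by
    have := hconc.min_le_of_mem_Icc (Set.left_mem_Icc.2 hw.le) (Set.right_mem_Icc.2 hw.le)
      (z := y) ⟨hy.le, hyw⟩
    rwa [hG0, hGw, min_self] at this
  have : 1 + 23 / 3 * Real.cos (y * T) - 9 * Real.sin (y * T) / y = G y / y := by
    simp only [G]; field_simp
  rw [this]
  positivity

/-- Strict positivity of the relevant combination in the admissible region. -/
theorem aux_pos (w T τ x y : ℝ) (hw : 38 / 5 < w) (hT : 0 < T) (hT1 : T < 21 / 100)
    (hwT : w * T + 1 / 50 < Real.pi / 2)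
    (h : 1 + 23 / 3 * Real.cos (w * T) = 9 * Real.sin (w * T) / w) (hy : 0 < y) (hx : 0 ≤ x)
    (hτ0 : 0 ≤ τ) (hτ : τ < T) (hy1 : y ^ 2 ≤ w ^ 2 + x) (hy2 : y ^ 2 ≤ w ^ 2 + 1 / 10) :
    0 < 1 + x + 23 / 3 * Real.cos (y * τ) - 9 * Real.sin (y * τ) / y ∧
      0 ≤ Real.cos (y * τ) ∧ 0 ≤ Real.sin (y * τ) := by
  have hyw2 : y - w ≤ 1 / 100 := by
    by_contra hc; push Not at hc; nlinarith
  have hyw1 : w ≤ y → 15 * (y - w) ≤ x := by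
    intro hc; nlinarith
  have hyT : y * T < Real.pi / 2 := by nlinarith
  have h0 : 0 ≤ y * τ := by positivity
  have hlt : y * τ < y * T := mul_lt_mul_of_pos_left hτ hy
  have hcos : Real.cos (y * T) < Real.cos (y * τ) :=
    Real.cos_lt_cos_of_nonneg_of_le_pi_div_two h0 hyT.le hlt
  have hsin : Real.sin (y * τ) < Real.sin (y * T) :=
    Real.sin_lt_sin_of_lt_of_le_pi_div_two (by linarith) hyT.le hlt
  have hw0 : 0 < w := by linarith
  refine ⟨?_, Real.cos_nonneg_of_neg_pi_div_two_le_of_le (by linarith) (by linarith),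
    Real.sin_nonneg_of_nonneg_of_le_pi h0 (by linarith)⟩
  have hdiv : 9 * Real.sin (y * τ) / y ≤ 9 * Real.sin (y * T) / y := by gcongr
  suffices 0 ≤ 1 + x + 23 / 3 * Real.cos (y * T) - 9 * Real.sin (y * T) / y by linarith
  rcases le_total y w with hyw | hyw
  · have := aux_concave w T hw0 hT hT1 (by linarith) h y hy hyw
    linarith
  · have hx15 := hyw1 hyw
    have hd0 : 0 ≤ y * T - w * T := by nlinarith
    have hd1 : y * T - w * T ≤ 21 / 100 * (y - w) := by nlinarith
    have hdc : Real.cos (w * T) - (y * T - w * T) ≤ Real.cos (y * T) := by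
      have := Real.abs_cos_sub_cos_le (y * T) (w * T)
      rw [abs_of_nonneg hd0] at this
      linarith [(abs_le.1 this).1]
    have hds : Real.sin (y * T) ≤ Real.sin (w * T) + (y * T - w * T) := by
      have := Real.abs_sin_sub_sin_le (y * T) (w * T)
      rw [abs_of_nonneg hd0] at this
      linarith [(abs_le.1 this).2]
    have hS0 : 0 ≤ Real.sin (w * T) + (y * T - w * T) :=
      add_nonneg (Real.sin_nonneg_of_nonneg_of_le_pi (by positivity)
        (by linarith [Real.pi_pos])) hd0
    have b1 : 9 * Real.sin (y * T) / y ≤ 9 * (Real.sin (w * T) + (y * T - w * T)) / w := by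
      gcongr
    have b2 : 9 * (Real.sin (w * T) + (y * T - w * T)) / w
        = 9 * Real.sin (w * T) / w + (y * T - w * T) * (9 / w) := by ring
    have b3 : 9 / w ≤ 2 := by rw [div_le_iff₀ hw0]; linarith
    have b4 := mul_le_mul_of_nonneg_left b3 hd0
    linarith

/-- The zeroth mode in the closed upper half plane. -/
theorem aux_zero (T τ x y : ℝ) (hmem : T ∈ Set.Ioo 0 (2 * Real.pi / omegaStar))
    (h : D0 T (Complex.I * (omegaStar : ℂ)) = 0) (hτ0 : 0 ≤ τ) (hτ : τ < T)
    (hx : 0 ≤ x) (hy : 0 ≤ y)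
    (h1 : x ^ 2 - y ^ 2 + 1 * x + 0 + Real.exp (-(x * τ)) *
      ((23 / 3 * x + 9) * Real.cos (y * τ) + 23 / 3 * y * Real.sin (y * τ)) = 0)
    (h2 : 2 * x * y + 1 * y + Real.exp (-(x * τ)) *
      (23 / 3 * y * Real.cos (y * τ) - (23 / 3 * x + 9) * Real.sin (y * τ)) = 0) : False := by
  obtain ⟨hw, hW1, hW2, hW3⟩ := aux_omega
  obtain ⟨t1, t2, t3, t4⟩ := aux_tau T hmem h
  have hE0 := Real.exp_pos (-(x * τ))
  have hE1 : Real.exp (-(x * τ)) ≤ 1 := by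
    rw [Real.exp_le_one_iff]; nlinarith [mul_nonneg hx hτ0]
  rcases hy.eq_or_lt with rfl | hy
  · simp at h1
    have : 0 < Real.exp (-(x * τ)) * (23 / 3 * x + 9) := by positivity
    nlinarith
  have hmod := aux_modulus 1 0 (23 / 3) 9 x y _ _ _ hE0 hE1 (Real.cos_sq_add_sin_sq (y * τ)) h1 h2
  obtain ⟨g1, g2⟩ := aux_region _ x y hW1 hW3 hx hmod
  obtain ⟨p1, p2, p3⟩ := aux_pos omegaStar T τ x y (by nlinarith) t2 t3 t4 t1 hy hx hτ0 hτ g1 g2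
  generalize Real.exp (-(x * τ)) = E at *
  generalize Real.cos (y * τ) = c at *
  generalize Real.sin (y * τ) = n at *
  have hcomb : (x + 1) * (x ^ 2 + y ^ 2)
      + E * (23 / 3 * c * (x ^ 2 + y ^ 2) + 9 * x * c - 9 * y * n) = 0 := by
    linear_combination x * h1 + y * h2
  have hpy : 0 < (1 + x) * y + 23 / 3 * c * y - 9 * n := by
    have := mul_pos p1 hy
    have e : (1 + x + 23 / 3 * c - 9 * n / y) * y = (1 + x) * y + 23 / 3 * c * y - 9 * n := by
      field_simp
    rwa [e] at this
  have hR : 0 < x ^ 2 + y ^ 2 := by positivity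
  have hpos : 0 < (x + 1) * (x ^ 2 + y ^ 2)
      + (23 / 3 * c * (x ^ 2 + y ^ 2) + 9 * x * c - 9 * y * n) := by
    have a1 := mul_pos hpy hy
    have a2 : 0 ≤ x * c := mul_nonneg hx p2
    have a3 : 0 ≤ x ^ 2 * c := mul_nonneg (sq_nonneg x) p2
    have a4 : 0 ≤ (x + 1) * x ^ 2 := by positivity
    nlinarith
  generalize 23 / 3 * c * (x ^ 2 + y ^ 2) + 9 * x * c - 9 * y * n = B at *
  have hq : 0 < (x + 1) * (x ^ 2 + y ^ 2) := by positivity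
  rcases le_total 0 B with hB | hB
  · have := mul_nonneg hE0.le hB
    linarith
  · nlinarith

/-- For every `ε > ε*` and every `τ` with `0 ≤ τ < τ*` (where `τ*` is the unique
`τ ∈ (0, 2π/ω*)` with `D_0(iω*; τ) = 0`), every `k ∈ ℕ₀` and every `λ ∈ ℂ` with
`D_k(λ; τ, ε) = 0` satisfies `Re λ < 0`; i.e., the constant steady state `(3, 2/9)` is
linearly asymptotically stable for `τ ∈ [0, τ*)` and `ε > ε*`. -/
theorem linear_stability_region (τs : ℝ)
    (hmem : τs ∈ Set.Ioo 0 (2 * Real.pi / omegaStar))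
    (hτs : D0 τs (Complex.I * (omegaStar : ℂ)) = 0)
    (ε : ℝ) (hε : epsStar < ε) (τ : ℝ) (hτ0 : 0 ≤ τ) (hττ : τ < τs) :
    ∀ k : ℕ, ∀ z : ℂ, Dk ε τ k z = 0 → z.re < 0 := by
  intro k z hz
  by_contra hre
  push Not at hre
  obtain ⟨x, y⟩ := z
  simp only at hre
  obtain ⟨h1, h2⟩ := aux_expand ε τ x y k hz
  rcases Nat.eq_zero_or_pos k with rfl | hk
  · have hp : pk ε 0 = 1 := by simp [pk]
    have hr : rk ε 0 = 0 := by simp [rk]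
    have hq : qk ε 0 = 9 := by simp [qk]
    rw [hp, hr, hq, sk] at h1
    rw [hp, hq, sk] at h2
    rcases le_total 0 y with hy | hy
    · exact aux_zero τs τ x y hmem hτs hτ0 hττ hre hy h1 h2
    · refine aux_zero τs τ x (-y) hmem hτs hτ0 hττ hre (by linarith) ?_ ?_
      · rw [neg_mul, Real.cos_neg, Real.sin_neg]; linear_combination h1
      · rw [neg_mul, Real.cos_neg, Real.sin_neg]; linear_combination -h2
  · obtain ⟨_, a1, a2, a3, a4⟩ := aux_eps ε hε k hk
    have hE0 := Real.exp_pos (-(x * τ))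
    have hE1 : Real.exp (-(x * τ)) ≤ 1 := by
      rw [Real.exp_le_one_iff]; nlinarith [mul_nonneg hre hτ0]
    exact aux_high _ _ _ _ x y hre (by norm_num [sk]) a1 a2 a3 a4
      (aux_modulus _ _ _ _ x y _ _ _ hE0 hE1 (Real.cos_sq_add_sin_sq (y * τ)) h1 h2)
end

section
/- There exist δ > 0 and a differentiable function γ : (ε* − δ, ε* + δ) → ℝ such that γ(ε*) = 0, D_1(γ(ε); τ*, ε) = 0 for all ε in this interval, and γ'(ε*) = −(16π⁴ + 36π²)/(p_1(ε*) + s_1 − τ* q_1(ε*)) < 0; i.e., the simple zero characteristic root of the first mode crosses zero transversally (with negative speed) as ε increases through ε*. -/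
open Filter Topology in
lemma local_inv_aux (g : ℝ → ℝ) (c : ℝ) (hg : ContDiffAt ℝ 1 g 0) (hd : HasDerivAt g c 0)
    (hc : c ≠ 0) : ∃ γ : ℝ → ℝ, γ (g 0) = 0 ∧ HasDerivAt γ c⁻¹ (g 0) ∧
      (∀ᶠ e in 𝓝 (g 0), DifferentiableAt ℝ γ e) ∧ (∀ᶠ e in 𝓝 (g 0), g (γ e) = e) := by
  have hs : HasStrictDerivAt g c 0 := hg.hasStrictDerivAt' hd one_ne_zero
  have hf := hs.hasStrictFDerivAt_equiv hc
  have h1 : ContDiffAt ℝ 1 (hs.localInverse g c 0 hc) (g 0) :=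
    hg.to_localInverse hf.hasFDerivAt one_ne_zero
  refine ⟨hs.localInverse g c 0 hc, hf.localInverse_apply_image,
    (hs.to_localInverse hc).hasDerivAt, ?_, hs.eventually_right_inverse hc⟩
  filter_upwards [h1.eventually (by simp)] with e he
  exact he.differentiableAt one_ne_zero

/-- Coefficient of `ε` in `D₁`. -/
noncomputable def auxA (τ x : ℝ) : ℝ :=
  4 * Real.pi ^ 2 * x + 16 * Real.pi ^ 4 + 36 * Real.pi ^ 2 * Real.exp (-x * τ)

/-- Part of `D₁` free of `ε`. -/
noncomputable def auxB (τ x : ℝ) : ℝ :=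
  x ^ 2 + (4 * Real.pi ^ 2 + 1) * x + 4 * Real.pi ^ 2 +
    (23 / 3 * x + (9 - 16 / 3 * Real.pi ^ 2)) * Real.exp (-x * τ)

lemma Dk_one_eq (ε τ x : ℝ) : Dk ε τ 1 (x : ℂ) = ((auxA τ x * ε + auxB τ x : ℝ) : ℂ) := by
  unfold Dk pk rk sk qk auxA auxB
  push_cast
  ring

lemma hasDerivAt_auxExp (τ : ℝ) : HasDerivAt (fun x : ℝ => Real.exp (-x * τ)) (-τ) 0 := by
  have h := (((hasDerivAt_id (0 : ℝ)).neg).mul_const τ).exp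
  simpa using h

lemma hasDerivAt_auxA (τ : ℝ) :
    HasDerivAt (auxA τ) (4 * Real.pi ^ 2 - 36 * Real.pi ^ 2 * τ) 0 := by
  have h := (((hasDerivAt_id (0 : ℝ)).const_mul (4 * Real.pi ^ 2)).add_const
    (16 * Real.pi ^ 4)).add ((hasDerivAt_auxExp τ).const_mul (36 * Real.pi ^ 2))
  convert! h using 1
  ring

lemma hasDerivAt_auxB (τ : ℝ) :
    HasDerivAt (auxB τ) (4 * Real.pi ^ 2 + 1 + 23 / 3 - τ * (9 - 16 / 3 * Real.pi ^ 2)) 0 := by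
  have h := (((hasDerivAt_pow 2 (0 : ℝ)).add
    ((hasDerivAt_id (0 : ℝ)).const_mul (4 * Real.pi ^ 2 + 1))).add_const (4 * Real.pi ^ 2)).add
    ((((hasDerivAt_id (0 : ℝ)).const_mul (23 / 3)).add_const (9 - 16 / 3 * Real.pi ^ 2)).mul
      (hasDerivAt_auxExp τ))
  convert! h using 1
  simp
  ring

/-- There exist `δ > 0` and a differentiable function `γ : (ε* - δ, ε* + δ) → ℝ` with
`γ(ε*) = 0`, `D_1(γ(ε); τ*, ε) = 0` on this interval, and
`γ'(ε*) = -(16π⁴ + 36π²)/(p₁(ε*) + s₁ - τ* q₁(ε*)) < 0`; i.e., the simple zero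
characteristic root of the first mode crosses zero transversally (with negative speed)
as `ε` increases through `ε*`. -/
theorem turing_transversality (τs : ℝ)
    (hmem : τs ∈ Set.Ioo 0 (2 * Real.pi / omegaStar))
    (hτs : D0 τs (Complex.I * (omegaStar : ℂ)) = 0) :
    ∃ δ : ℝ, 0 < δ ∧ ∃ γ : ℝ → ℝ,
      γ epsStar = 0 ∧
      (∀ ε ∈ Set.Ioo (epsStar - δ) (epsStar + δ), DifferentiableAt ℝ γ ε) ∧
      (∀ ε ∈ Set.Ioo (epsStar - δ) (epsStar + δ), Dk ε τs 1 ((γ ε : ℝ) : ℂ) = 0) ∧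
      HasDerivAt γ
        (-(16 * Real.pi ^ 4 + 36 * Real.pi ^ 2) /
          (pk epsStar 1 + sk - τs * qk epsStar 1)) epsStar ∧
      -(16 * Real.pi ^ 4 + 36 * Real.pi ^ 2) /
          (pk epsStar 1 + sk - τs * qk epsStar 1) < 0 := by
  have hpi : 0 < Real.pi := Real.pi_pos
  have hpi3 : 3 < Real.pi := Real.pi_gt_three
  have hτ : 0 < τs := hmem.1
  set K : ℝ := 16 * Real.pi ^ 4 + 36 * Real.pi ^ 2 with hK
  have hKpos : 0 < K := by positivity
  have hE : epsStar * K = 4 * Real.pi ^ 2 / 3 - 9 := by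
    unfold epsStar
    rw [← hK]
    field_simp
  have hEpos : 0 < epsStar := by
    unfold epsStar
    rw [← hK]
    apply div_pos _ hKpos
    nlinarith
  have hA0 : auxA τs 0 = K := by simp [auxA, hK]
  have hB0 : auxB τs 0 = -(epsStar * K) := by
    rw [hE]; simp [auxB]; ring
  set M : ℝ := pk epsStar 1 + sk - τs * qk epsStar 1 with hM
  have hq : qk epsStar 1 < 0 := by
    have h1 : qk epsStar 1 = -(16 * epsStar * Real.pi ^ 4 + 4 * Real.pi ^ 2) := by
      unfold qk
      rw [hK] at hE
      push_cast
      linarith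
    rw [h1]
    have : 0 < 16 * epsStar * Real.pi ^ 4 + 4 * Real.pi ^ 2 := by positivity
    linarith
  have hMpos : 0 < M := by
    have h1 : 0 < pk epsStar 1 := by unfold pk; positivity
    have h2 : 0 < sk := by unfold sk; norm_num
    have h3 : τs * qk epsStar 1 < 0 := mul_neg_of_pos_of_neg hτ hq
    linarith
  let g : ℝ → ℝ := fun x => -auxB τs x / auxA τs x
  have hg0 : g 0 = epsStar := by
    simp only [g, hA0, hB0]
    field_simp
  have hgd : HasDerivAt g (-M / K) 0 := by
    have h := (hasDerivAt_auxB τs).neg.div (hasDerivAt_auxA τs) (by rw [hA0]; exact hKpos.ne')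
    convert! h using 1
    rw [Pi.neg_apply, hA0, hB0, hM]
    unfold pk sk qk
    push_cast
    field_simp
    ring
  have hcA : ContDiff ℝ 1 (auxA τs) := by unfold auxA; fun_prop
  have hcB : ContDiff ℝ 1 (auxB τs) := by unfold auxB; fun_prop
  have hgc : ContDiffAt ℝ 1 g 0 :=
    hcB.contDiffAt.neg.div hcA.contDiffAt (by rw [hA0]; exact hKpos.ne')
  obtain ⟨γ, h0, hd, hdiff, hinv⟩ := local_inv_aux g _ hgc hgd
    (div_ne_zero (neg_ne_zero.mpr hMpos.ne') hKpos.ne')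
  rw [hg0] at h0 hd hdiff hinv
  have hne : ∀ᶠ e in nhds epsStar, auxA τs (γ e) ≠ 0 := by
    have hc : ContinuousAt (fun e => auxA τs (γ e)) epsStar :=
      ContinuousAt.comp (g := auxA τs) hcA.continuous.continuousAt hd.continuousAt
    apply hc.eventually_ne
    rw [h0, hA0]
    exact hKpos.ne'
  obtain ⟨δ, hδ, hball⟩ := Metric.eventually_nhds_iff_ball.mp (hdiff.and (hinv.and hne))
  rw [Real.ball_eq_Ioo] at hball
  refine ⟨δ, hδ, γ, h0, fun ε hε => (hball ε hε).1, fun ε hε => ?_, ?_, ?_⟩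
  · obtain ⟨-, h1, h2⟩ := hball ε hε
    rw [Dk_one_eq]
    norm_cast
    simp only [g] at h1
    rw [div_eq_iff h2] at h1
    linarith
  · convert! hd using 1
    rw [inv_div, div_neg, neg_div]
  · rw [neg_div]
    exact neg_neg_of_pos (div_pos hKpos hMpos)
end

section
/- There exist δ > 0 and a continuously differentiable function λ : (τ* − δ, τ* + δ) → ℂ such that λ(τ*) = iω*, D_0(λ(τ); τ) = 0 for all τ in this interval, and Re λ'(τ*) > 0; i.e., the simple purely imaginary characteristic roots of the zeroth mode cross the imaginary axis transversally from left to right as the delay τ increases through τ*. -/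
open scoped Topology ContDiff

/-- complexified zeroth-mode function of (delay, root) -/
noncomputable def FF (p : ℂ × ℂ) : ℂ :=
  p.2 ^ 2 + p.2 + ((23 / 3 : ℂ) * p.2 + 9) * Complex.exp (-p.2 * p.1)

theorem omegaStar_facts : 0 < omegaStar ∧ 520 / 18 < omegaStar ^ 2 ∧
    omegaStar ^ 4 - 520 / 9 * omegaStar ^ 2 - 81 = 0 := by
  have h1 : 0 < Real.sqrt 296644 := Real.sqrt_pos.mpr (by norm_num)
  have h2 : Real.sqrt 296644 ^ 2 = 296644 := Real.sq_sqrt (by norm_num)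
  have h3 : omegaStar ^ 2 = (520 + Real.sqrt 296644) / 18 := Real.sq_sqrt (by positivity)
  refine ⟨Real.sqrt_pos.mpr (by positivity), by rw [h3]; linarith, ?_⟩
  have : omegaStar ^ 4 = (omegaStar ^ 2) ^ 2 := by ring
  rw [this, h3]
  linear_combination h2 / 324

theorem key_re (w t : ℝ) (hw : 0 < w) (h1 : 520 / 18 < w ^ 2)
    (h2 : w ^ 4 - 520 / 9 * w ^ 2 - 81 = 0) (z P Q G N : ℂ) (hz : z = Complex.I * w)
    (hP : P = z ^ 2 + z) (hQ : Q = 23 / 3 * z + 9)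
    (hG : G = (2 * z + 1) * Q - 23 / 3 * P + t * (P * Q)) (hN : N = -(z * (P * Q))) :
    0 < G.re * N.re + G.im * N.im := by
  have hzr : z.re = 0 := by simp [hz]
  have hzi : z.im = w := by simp [hz]
  have hPr : P.re = -w ^ 2 := by simp [hP, hzr, hzi, pow_two]
  have hPi : P.im = w := by simp [hP, hzr, hzi, pow_two]
  have c1 : (23 / 3 : ℂ).re = 23 / 3 := by norm_num
  have c2 : (23 / 3 : ℂ).im = 0 := by norm_num
  have hQr : Q.re = 9 := by
    rw [hQ, Complex.add_re, Complex.mul_re, c1, c2, hzr]; norm_num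
  have hQi : Q.im = 23 / 3 * w := by
    rw [hQ, Complex.add_im, Complex.mul_im, c1, c2, hzr, hzi]; norm_num
  have hGr : G.re = (9 - 2 * w * (23 / 3 * w)) + 23 / 3 * w ^ 2
      + t * (-w ^ 2 * 9 - w * (23 / 3 * w)) := by
    rw [hG]
    simp only [Complex.add_re, Complex.sub_re, Complex.mul_re, Complex.mul_im, Complex.add_im,
      hPr, hPi, hQr, hQi, c1, c2, hzr, hzi, Complex.ofReal_re, Complex.ofReal_im,
      Complex.one_re, Complex.one_im, Complex.re_ofNat, Complex.im_ofNat]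
    ring
  have hGi : G.im = (23 / 3 * w + 18 * w) - 23 / 3 * w
      + t * (-w ^ 2 * (23 / 3 * w) + w * 9) := by
    rw [hG]
    simp only [Complex.add_re, Complex.sub_im, Complex.mul_re, Complex.mul_im, Complex.add_im,
      hPr, hPi, hQr, hQi, c1, c2, hzr, hzi, Complex.ofReal_re, Complex.ofReal_im,
      Complex.one_re, Complex.one_im, Complex.re_ofNat, Complex.im_ofNat]
    ring
  have hNr : N.re = w * (-w ^ 2 * (23 / 3 * w) + w * 9) := by
    rw [hN]
    simp only [Complex.neg_re, Complex.mul_re, Complex.mul_im, hPr, hPi, hQr, hQi, hzr, hzi]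
    ring
  have hNi : N.im = -(w * (-w ^ 2 * 9 - w * (23 / 3 * w))) := by
    rw [hN]
    simp only [Complex.neg_im, Complex.mul_re, Complex.mul_im, hPr, hPi, hQr, hQi, hzr, hzi]
    ring
  have e : G.re * N.re + G.im * N.im =
      w ^ 2 * ((2 * w ^ 2 + 1) * (529 / 9 * w ^ 2 + 81) - 529 / 9 * (w ^ 4 + w ^ 2)) := by
    rw [hGr, hGi, hNr, hNi]; ring
  rw [e]
  have h4 : w ^ 4 + w ^ 2 = 529 / 9 * w ^ 2 + 81 := by linarith
  rw [h4]
  have : (2 * w ^ 2 + 1) * (529 / 9 * w ^ 2 + 81) - 529 / 9 * (529 / 9 * w ^ 2 + 81)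
    = (2 * w ^ 2 - 520 / 9) * (529 / 9 * w ^ 2 + 81) := by ring
  rw [this]
  have : 0 < 2 * w ^ 2 - 520 / 9 := by linarith
  positivity

/-- There exist `δ > 0` and a continuously differentiable `λ : (τ* - δ, τ* + δ) → ℂ`
with `λ(τ*) = iω*`, `D_0(λ(τ); τ) = 0` on this interval, and `Re λ'(τ*) > 0`; i.e., the
simple purely imaginary characteristic roots of the zeroth mode cross the imaginary
axis transversally from left to right as the delay `τ` increases through `τ*`. -/
theorem hopf_transversality (τs : ℝ)
    (hmem : τs ∈ Set.Ioo 0 (2 * Real.pi / omegaStar))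
    (hτs : D0 τs (Complex.I * (omegaStar : ℂ)) = 0) :
    ∃ δ : ℝ, 0 < δ ∧ ∃ lam lam' : ℝ → ℂ,
      lam τs = Complex.I * (omegaStar : ℂ) ∧
      (∀ τ ∈ Set.Ioo (τs - δ) (τs + δ), HasDerivAt lam (lam' τ) τ) ∧
      ContinuousOn lam' (Set.Ioo (τs - δ) (τs + δ)) ∧
      (∀ τ ∈ Set.Ioo (τs - δ) (τs + δ), D0 τ (lam τ) = 0) ∧
      0 < (lam' τs).re := by
  obtain ⟨hw, h1, h2⟩ := omegaStar_facts
  obtain ⟨z, hz⟩ : ∃ z : ℂ, z = Complex.I * (omegaStar : ℂ) := ⟨_, rfl⟩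
  obtain ⟨P, hP⟩ : ∃ P : ℂ, P = z ^ 2 + z := ⟨_, rfl⟩
  obtain ⟨Q, hQ⟩ : ∃ Q : ℂ, Q = 23 / 3 * z + 9 := ⟨_, rfl⟩
  obtain ⟨E, hE⟩ : ∃ E : ℂ, E = Complex.exp (-z * (τs : ℂ)) := ⟨_, rfl⟩
  have key := key_re omegaStar τs hw h1 h2 z P Q _ _ hz hP hQ rfl rfl
  obtain ⟨G, hG⟩ : ∃ G : ℂ, G = (2 * z + 1) * Q - 23 / 3 * P + τs * (P * Q) := ⟨_, rfl⟩
  obtain ⟨N, hN⟩ : ∃ N : ℂ, N = -(z * (P * Q)) := ⟨_, rfl⟩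
  rw [← hG, ← hN] at key
  rw [← hz] at hτs ⊢
  have h0 : P + Q * E = 0 := by rw [hP, hQ, hE]; exact hτs
  have hFz : ((2 * z + 1) + (23 / 3 * E + Q * (E * (-τs)))) * Q = G := by
    rw [hG]; linear_combination (23 / 3 - τs * Q) * h0
  have cdf : ContDiffAt ℂ ω FF ((τs : ℂ), z) := by
    unfold FF; fun_prop
  have hd : HasDerivAt (fun y : ℂ => FF ((τs : ℂ), y))
      ((2 * z + 1) + (23 / 3 * E + Q * (E * (-τs)))) z := by
    unfold FF
    have a1 : HasDerivAt (fun y : ℂ => y ^ 2 + y) (2 * z + 1) z := by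
      exact ((hasDerivAt_pow 2 z).add (hasDerivAt_id z)).congr_deriv (by simp)
    have a2 : HasDerivAt (fun y : ℂ => (23 / 3 : ℂ) * y + 9) (23 / 3) z := by
      simpa using ((hasDerivAt_id z).const_mul (23 / 3 : ℂ)).add_const 9
    have a3 : HasDerivAt (fun y : ℂ => Complex.exp (-y * (τs : ℂ))) (E * (-τs)) z := by
      have := ((hasDerivAt_id z).neg.mul_const (τs : ℂ)).cexp
      simpa [hE] using this
    have := a1.add (a2.mul a3)
    rw [hQ, hE] at *
    exact this
  have hne : (2 * z + 1) + (23 / 3 * E + Q * (E * (-τs))) ≠ 0 := by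
    intro h
    rw [h, zero_mul] at hFz
    rw [← hFz] at key
    simp at key
  have hfd : (fderiv ℂ FF ((τs : ℂ), z) ∘L .inr ℂ ℂ ℂ) 1
      = (2 * z + 1) + (23 / 3 * E + Q * (E * (-τs))) := by
    have b1 : HasFDerivAt FF (fderiv ℂ FF ((τs : ℂ), z)) ((τs : ℂ), z) :=
      (cdf.differentiableAt (by simp)).hasFDerivAt
    have b2 : HasDerivAt (fun y : ℂ => ((τs : ℂ), y)) ((0 : ℂ), (1 : ℂ)) z :=
      (hasDerivAt_const z (τs : ℂ)).prodMk (hasDerivAt_id z)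
    have b3 := b1.comp_hasDerivAt z b2
    simpa using b3.unique hd
  have hinv : (fderiv ℂ FF ((τs : ℂ), z) ∘L .inr ℂ ℂ ℂ).IsInvertible := by
    refine ⟨ContinuousLinearEquiv.unitsEquivAut ℂ (Units.mk0 _ hne), ?_⟩
    ext
    rw [hfd]; simp
  obtain ⟨ψ, hψ⟩ : ∃ ψ, ψ = cdf.implicitFunction (by simp) hinv := ⟨_, rfl⟩
  have p1 : ψ (τs : ℂ) = z := by
    rw [hψ]; exact cdf.implicitFunction_apply_self (by simp) hinv
  have p2 : ∀ᶠ x in 𝓝 (τs : ℂ), FF (x, ψ x) = 0 := by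
    have h := cdf.eventually_apply_implicitFunction (by simp) hinv
    rw [← hψ] at h
    have h00 : FF ((τs : ℂ), z) = 0 := hτs
    rw [h00] at h
    exact h
  have p3 : AnalyticAt ℂ ψ (τs : ℂ) := by
    have h := cdf.contDiffAt_implicitFunction (by simp) hinv
    rw [← hψ] at h
    exact h.analyticAt
  have p4 := p2.and p3.eventually_analyticAt
  have p5 : ∀ᶠ t : ℝ in 𝓝 τs, FF ((t : ℂ), ψ t) = 0 ∧ AnalyticAt ℂ ψ (t : ℂ) :=
    (Complex.continuous_ofReal.tendsto τs).eventually p4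
  obtain ⟨δ, hδ, hb⟩ := Metric.eventually_nhds_iff_ball.mp p5
  rw [Real.ball_eq_Ioo] at hb
  refine ⟨δ, hδ, fun t => ψ t, fun t => deriv ψ t, p1, ?_, ?_, ?_, ?_⟩
  · intro t ht
    exact (hb t ht).2.differentiableAt.hasDerivAt.comp_ofReal
  · intro t ht
    exact (ContinuousAt.comp (f := fun t : ℝ => (t : ℂ)) (hb t ht).2.deriv.continuousAt
      Complex.continuous_ofReal.continuousAt).continuousWithinAt
  · intro t ht
    exact (hb t ht).1
  · show 0 < (deriv ψ (τs : ℂ)).re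
    have q1 : HasDerivAt ψ (deriv ψ (τs : ℂ)) (τs : ℂ) := p3.differentiableAt.hasDerivAt
    obtain ⟨m, hm⟩ : ∃ m, m = deriv ψ (τs : ℂ) := ⟨_, rfl⟩
    rw [← hm] at q1 ⊢
    have q2 : HasDerivAt (fun x => FF (x, ψ x)) 0 (τs : ℂ) :=
      (hasDerivAt_const (τs : ℂ) (0 : ℂ)).congr_of_eventuallyEq p2
    have q3 : HasDerivAt (fun x => FF (x, ψ x))
        ((2 * z * m + m) + (23 / 3 * m * E + Q * (E * (-m * τs + -z)))) (τs : ℂ) := by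
      have a1 : HasDerivAt (fun x => ψ x ^ 2 + ψ x) (2 * z * m + m) (τs : ℂ) := by
        exact ((q1.pow 2).add q1).congr_deriv (by simp [p1])
      have a2 : HasDerivAt (fun x => (23 / 3 : ℂ) * ψ x + 9) (23 / 3 * m) (τs : ℂ) := by
        simpa using (q1.const_mul (23 / 3 : ℂ)).add_const 9
      have a3 : HasDerivAt (fun x => Complex.exp (-ψ x * x)) (E * (-m * τs + -z)) (τs : ℂ) := by
        have := (q1.neg.mul (hasDerivAt_id (τs : ℂ))).cexp
        simpa [hE, p1] using this
      have := a1.add (a2.mul a3)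
      rw [p1, ← hQ, neg_mul z, ← neg_mul, ← hE] at this
      exact this
    have q4 := q3.unique q2
    have q5 : m * G = N := by
      rw [← hFz, hN]
      linear_combination Q * q4 + z * Q * h0
    have r1 : N.re = m.re * G.re - m.im * G.im := by rw [← q5, Complex.mul_re]
    have r2 : N.im = m.re * G.im + m.im * G.re := by rw [← q5, Complex.mul_im]
    rw [r1, r2] at key
    have key2 : 0 < m.re * (G.re ^ 2 + G.im ^ 2) := by linarith
    exact pos_of_mul_pos_left key2 (by positivity)
end
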